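/- Let V be a real vector space with finite dimension n, let C : Fin N → Set V be a finite family of convex sets, and let c : V → ℝ be a linear functional. Suppose the infimum v* of c over the intersection ⋂_i C i is attained at some point x*. Then there exists a subset S ⊆ Fin N with |S| ≤ n such that the infimum of c over the intersection ⋂_{i ∈ S} C i also equals v* (and is attained at x*). -/

import Mathlib

/-- Levin's theorem as used in the paper: if a linear functional `c` attains its infimum `v*`
over the intersection of `N` convex sets in an `n`-dimensional real vector space at a point
`x*`, then at most `n` of the sets already suffice: there is a subset `S` of the indices with
`|S| ≤ n` such that the infimum of `c` over `⋂ i ∈ S, C i` is also `v*`, attained at `x*`. -/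
theorem levin_support_scenarios {V : Type*} [AddCommGroup V] [Module ℝ V]
    [FiniteDimensional ℝ V] (n : ℕ) (hn : Module.finrank ℝ V = n)
    (N : ℕ) (C : Fin N → Set V) (hC : ∀ i, Convex ℝ (C i))
    (c : V →ₗ[ℝ] ℝ) (vstar : ℝ) (xstar : V)
    (hxmem : xstar ∈ ⋂ i, C i) (hxval : c xstar = vstar)
    (hmin : ∀ x ∈ ⋂ i, C i, vstar ≤ c x) :
    ∃ S : Finset (Fin N), S.card ≤ n ∧ (xstar ∈ ⋂ i ∈ S, C i) ∧
      ∀ x ∈ ⋂ i ∈ S, C i, vstar ≤ c x := by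
  classical
  by_contra! hcon
  have hx : ∀ i, xstar ∈ C i := by simpa using hxmem
  let F : Option (Fin N) → Set V := fun o => o.elim {x | c x < vstar} C
  have hne : (⋂ i ∈ (Finset.univ : Finset (Option (Fin N))), F i).Nonempty := by
    apply Convex.helly_theorem' (𝕜 := ℝ)
    · intro o _
      cases o with
      | none => exact convex_halfSpace_lt c.isLinear vstar
      | some i => exact hC i
    · intro I _ hI
      by_cases h : none ∈ I
      · have hcard : (Finset.eraseNone I).card ≤ n := by
          have h1 : (Finset.eraseNone I).card = (I.erase none).card := by
            rw [← Finset.map_some_eraseNone, Finset.card_map]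
          rw [h1, Finset.card_erase_of_mem h]
          omega
        obtain ⟨x, hxS, hlt⟩ := hcon _ hcard (by simp [hx])
        refine ⟨x, ?_⟩
        simp only [Set.mem_iInter, Finset.mem_eraseNone] at hxS ⊢
        intro o ho
        cases o with
        | none => exact hlt
        | some i => exact hxS i ho
      · refine ⟨xstar, ?_⟩
        simp only [Set.mem_iInter]
        intro o ho
        cases o with
        | none => exact absurd ho h
        | some i => exact hx i
  obtain ⟨x, hxF⟩ := hne
  simp only [Set.mem_iInter, Finset.mem_univ, forall_true_left] at hxF
  have h1 : c x < vstar := hxF none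
  have h2 : vstar ≤ c x := hmin x (Set.mem_iInter.2 fun i => hxF (some i))
  exact absurd h1 (not_lt.2 h2)
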